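/- Let β : [0,t_f] → {0,1}^N be the sum-up rounding of α on the grid. Then for every t ∈ [0,t_f] one has max_{i=1,…,N} |∫_0^t (α_i(τ) − β_i(τ)) dτ| ≤ (N−1)·Δt. -/

import Mathlib

/-!
Write `A i t = ∫₀ᵗ α_i` and let `s_j` be the accumulated rounding up to `t_j`, so that on
`[t_j, t_{j+1}]` the deviation is `A i t - (s_j i + p_j i * (t - t_j))` (`integral_sub_rounding`).
The deviations of the `N` components sum to zero at every time, hence it suffices to bound each of
them from below by `-c` with `c = (N - 1) / N * Δt`: the upper bound `(N - 1) * c ≤ (N - 1) * Δt`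
follows by summing over the other components.

The lower bound (`rounding_lower`) is an induction over the grid. On an interval where `i` is not
chosen, its deviation is nondecreasing. On an interval of length `h` where `i` is chosen it is
nonincreasing, so its minimum is the value `p̂ i - h` at the right end point; being maximal, `p̂ i`
is at least the mean of all residuals, which is `h / N`.
-/

open MeasureTheory

-- Given the vector `phat` of residuals at one grid interval, `surChoice phat i = 1`
-- iff `i` is the smallest index maximizing `phat`, and `0` otherwise.
open Classical in
noncomputable def surChoice {N : ℕ} (phat : Fin N → ℝ) : Fin N → ℝ :=
  fun i => if (∀ l, phat l ≤ phat i) ∧ (∀ l, phat l = phat i → i ≤ l) then 1 else 0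

/-- `surData t α j = (p_{·,j}, s_{·,j})` where `p_{·,j}` is the sum-up rounding row at
grid interval `j` (for the grid `t` and relaxed weights `α`), and
`s_{i,j} = Σ_{l<j} p_{i,l} (t_{l+1} - t_l)`.  The residuals are
`p̂_{i,j} = ∫_0^{t_{j+1}} α_i(τ) dτ - s_{i,j}`, and `p_{·,j} = surChoice p̂_{·,j}`. -/
noncomputable def surData {N : ℕ} (t : ℕ → ℝ) (α : ℝ → Fin N → ℝ) :
    ℕ → (Fin N → ℝ) × (Fin N → ℝ)
  | 0 => (surChoice fun i => ∫ τ in (0:ℝ)..(t 1), α τ i, fun _ => 0)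
  | j + 1 =>
    let prev := surData t α j
    let s : Fin N → ℝ := fun i => prev.2 i + prev.1 i * (t (j + 1) - t j)
    (surChoice fun i => (∫ τ in (0:ℝ)..(t (j + 2)), α τ i) - s i, s)

/-- `surRound t α j i` is the sum-up rounding value `p_{i,j}`. -/
noncomputable def surRound {N : ℕ} (t : ℕ → ℝ) (α : ℝ → Fin N → ℝ) (j : ℕ) :
    Fin N → ℝ :=
  (surData t α j).1

theorem surChoice_spec {N : ℕ} (hN : 1 ≤ N) (q : Fin N → ℝ) :
    ∃ k, (∀ i, surChoice q i = if i = k then 1 else 0) ∧ ∀ l, q l ≤ q k := by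
  classical
  have : Nonempty (Fin N) := ⟨⟨0, hN⟩⟩
  obtain ⟨m, -, hm⟩ := Finset.exists_max_image Finset.univ q Finset.univ_nonempty
  have hS : (Finset.univ.filter fun i => q i = q m).Nonempty := ⟨m, by simp⟩
  obtain ⟨k, hk, hkmin⟩ := Finset.exists_min_image _ id hS
  have hkm : q k = q m := by simpa using hk
  refine ⟨k, fun i => ?_, fun l => hkm ▸ hm l (Finset.mem_univ l)⟩
  unfold surChoice
  congr 1
  apply propext
  constructor
  · rintro ⟨h1, h2⟩
    have e : q i = q m := le_antisymm (hm i (Finset.mem_univ i)) (h1 m)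
    exact le_antisymm (h2 k (hkm.trans e.symm)) (hkmin i (by simp [e]))
  · rintro rfl
    exact ⟨fun l => hkm ▸ hm l (Finset.mem_univ l),
      fun l hl => hkmin l (by simp [hl, hkm])⟩

/-- The accumulated rounding `s_{i,j} = Σ_{l<j} p_{i,l} (t_{l+1} - t_l)`. -/
noncomputable def surSum {N : ℕ} (t : ℕ → ℝ) (α : ℝ → Fin N → ℝ) (j : ℕ) : Fin N → ℝ :=
  (surData t α j).2

theorem surSum_zero {N : ℕ} (t : ℕ → ℝ) (α : ℝ → Fin N → ℝ) (i : Fin N) :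
    surSum t α 0 i = 0 := rfl

theorem surSum_succ {N : ℕ} (t : ℕ → ℝ) (α : ℝ → Fin N → ℝ) (j : ℕ) (i : Fin N) :
    surSum t α (j + 1) i = surSum t α j i + surRound t α j i * (t (j + 1) - t j) := rfl

theorem surRound_eq {N : ℕ} (t : ℕ → ℝ) (α : ℝ → Fin N → ℝ) (j : ℕ) :
    surRound t α j
      = surChoice fun i => (∫ τ in (0:ℝ)..(t (j + 1)), α τ i) - surSum t α j i := by
  cases j with
  | zero => simp [surRound, surSum, surData]
  | succ j => rfl

theorem surRound_spec {N : ℕ} (hN : 1 ≤ N) (t : ℕ → ℝ) (α : ℝ → Fin N → ℝ) (j : ℕ) :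
    ∃ k, (∀ i, surRound t α j i = if i = k then 1 else 0) ∧
      ∀ l, (∫ τ in (0:ℝ)..(t (j + 1)), α τ l) - surSum t α j l
        ≤ (∫ τ in (0:ℝ)..(t (j + 1)), α τ k) - surSum t α j k := by
  rw [surRound_eq]
  exact surChoice_spec hN _

theorem sum_surRound {N : ℕ} (hN : 1 ≤ N) (t : ℕ → ℝ) (α : ℝ → Fin N → ℝ) (j : ℕ) :
    ∑ i, surRound t α j i = 1 := by
  obtain ⟨k, hk, -⟩ := surRound_spec hN t α j
  simp [hk]

theorem sum_surSum {N : ℕ} (hN : 1 ≤ N) (t : ℕ → ℝ) (α : ℝ → Fin N → ℝ) (j : ℕ) :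
    ∑ i, surSum t α j i = t j - t 0 := by
  induction j with
  | zero => simp [surSum_zero]
  | succ j ih =>
    simp only [surSum_succ, Finset.sum_add_distrib, ← Finset.sum_mul, ih, sum_surRound hN]
    ring

/-- One step of the induction: a lower bound at the left end point of a grid interval persists
on the whole interval. `A i` plays the role of `t ↦ ∫₀ᵗ α_i`. -/
theorem rounding_step {N : ℕ} (hN : 1 ≤ N) (A : Fin N → ℝ → ℝ) (s : Fin N → ℝ) (k : Fin N)
    (a b Δ u : ℝ) (hab : b - a ≤ Δ)
    (hmono : ∀ i, A i a ≤ A i u) (hlip : ∀ i, A i b - A i u ≤ b - u)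
    (hsum : ∑ i, A i b = b) (hs : ∑ i, s i = a)
    (hk : ∀ l, A l b - s l ≤ A k b - s k)
    (hlow : ∀ i, -(((N : ℝ) - 1) / N * Δ) ≤ A i a - s i) (i : Fin N) :
    -(((N : ℝ) - 1) / N * Δ) ≤ A i u - (s i + (if i = k then 1 else 0) * (u - a)) := by
  split_ifs with hik
  · subst hik
    have hN' : (1:ℝ) ≤ N := by exact_mod_cast hN
    have hN0 : (0:ℝ) < N := by linarith
    -- the maximal residual is at least the mean `(b - a) / N`
    have h1 : b - a ≤ N * (A i b - s i) := by
      calc b - a = ∑ l, (A l b - s l) := by rw [Finset.sum_sub_distrib, hsum, hs]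
        _ ≤ ∑ _l : Fin N, (A i b - s i) := Finset.sum_le_sum fun l _ => hk l
        _ = N * (A i b - s i) := by simp [mul_sub]
    have h2 : (b - a) / N ≤ A i b - s i := by
      rw [div_le_iff₀ hN0]; linarith
    have h3 : ((N : ℝ) - 1) / N * (b - a) ≤ ((N : ℝ) - 1) / N * Δ :=
      mul_le_mul_of_nonneg_left hab (div_nonneg (by linarith) hN0.le)
    have h4 : ((N : ℝ) - 1) / N * (b - a) = (b - a) - (b - a) / N := by
      field_simp
    have := hlip i
    linarith
  · have := hmono i
    have := hlow i
    linarith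

theorem grid_mono {n : ℕ} {tg : ℕ → ℝ} (hmono : ∀ j < n, tg j < tg (j + 1)) {j m : ℕ}
    (hjm : j ≤ m) (hm : m ≤ n) : tg j ≤ tg m := by
  induction m, hjm using Nat.le_induction with
  | base => exact le_rfl
  | succ m _ ih => exact (ih (by omega)).trans (hmono m (by omega)).le

theorem exists_grid_interval {tg : ℕ → ℝ} {u : ℝ} (h0 : tg 0 ≤ u) (n : ℕ) (hn : 0 < n)
    (hu : u ≤ tg n) : ∃ j < n, tg j ≤ u ∧ u ≤ tg (j + 1) := by
  induction n with
  | zero => omega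
  | succ n ih =>
    rcases le_or_gt (tg n) u with h | h
    · exact ⟨n, by omega, h, hu⟩
    · rcases Nat.eq_zero_or_pos n with rfl | hp
      · exact absurd h0 (not_le.mpr h)
      · obtain ⟨j, hj, hh⟩ := ih hp h.le
        exact ⟨j, by omega, hh⟩

/-- A function that is constant on `[a, b)` has the obvious integral over subintervals of `[a, b]`;
its value at `b` is irrelevant. -/
theorem integral_of_eq_const_Ico {f : ℝ → ℝ} {a b c u : ℝ} (hau : a ≤ u) (hub : u ≤ b)
    (hf : ∀ τ ∈ Set.Ico a b, f τ = c) :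
    IntervalIntegrable f volume a u ∧ ∫ τ in a..u, f τ = c * (u - a) := by
  have hae : ∀ᵐ τ ∂volume, τ ∈ Set.uIoc a u → c = f τ := by
    have hne : ∀ᵐ τ ∂(volume : Measure ℝ), τ ≠ b := by
      simp [ae_iff, measure_singleton]
    filter_upwards [hne] with τ hτ hmem
    rw [Set.uIoc_of_le hau] at hmem
    exact (hf τ ⟨hmem.1.le, lt_of_le_of_ne (hmem.2.trans hub) hτ⟩).symm
  constructor
  · exact (intervalIntegrable_const (c := c)).congr_ae
      ((ae_restrict_iff' measurableSet_uIoc).mpr hae)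
  · rw [← intervalIntegral.integral_congr_ae hae]
    simp [mul_comm]

theorem integral_rounding_grid {N n : ℕ} {tg : ℕ → ℝ} (hg0 : tg 0 = 0)
    (hmono : ∀ j < n, tg j < tg (j + 1)) {α β : ℝ → Fin N → ℝ}
    (hβ : ∀ j < n, ∀ τ ∈ Set.Ico (tg j) (tg (j + 1)), β τ = surRound tg α j)
    (i : Fin N) (j : ℕ) (hj : j ≤ n) :
    IntervalIntegrable (fun τ => β τ i) volume 0 (tg j) ∧
      ∫ τ in (0:ℝ)..(tg j), β τ i = surSum tg α j i := by
  induction j with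
  | zero => simp [hg0, surSum_zero]
  | succ j ih =>
    obtain ⟨h1, h2⟩ := ih (by omega)
    obtain ⟨h3, h4⟩ := integral_of_eq_const_Ico (f := fun τ => β τ i) (hmono j hj).le le_rfl
      fun τ hτ => congrFun (hβ j hj τ hτ) i
    refine ⟨h1.trans h3, ?_⟩
    rw [← intervalIntegral.integral_add_adjacent_intervals h1 h3, h2, h4, surSum_succ]

theorem integral_sub_rounding {N n : ℕ} {tg : ℕ → ℝ} (hg0 : tg 0 = 0)
    (hmono : ∀ j < n, tg j < tg (j + 1)) {α β : ℝ → Fin N → ℝ}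
    (hβ : ∀ j < n, ∀ τ ∈ Set.Ico (tg j) (tg (j + 1)), β τ = surRound tg α j)
    (i : Fin N) (j : ℕ) (hj : j < n) (u : ℝ) (h1 : tg j ≤ u) (h2 : u ≤ tg (j + 1))
    (hα : IntervalIntegrable (fun τ => α τ i) volume 0 u) :
    ∫ τ in (0:ℝ)..u, (α τ i - β τ i) =
      (∫ τ in (0:ℝ)..u, α τ i) - (surSum tg α j i + surRound tg α j i * (u - tg j)) := by
  obtain ⟨h3, h4⟩ := integral_rounding_grid hg0 hmono hβ i j hj.le
  obtain ⟨h5, h6⟩ := integral_of_eq_const_Ico (f := fun τ => β τ i) h1 h2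
    fun τ hτ => congrFun (hβ j hj τ hτ) i
  rw [intervalIntegral.integral_sub hα (h3.trans h5),
    ← intervalIntegral.integral_add_adjacent_intervals h3 h5, h4, h6]

/-- The lower bound `-(N - 1) / N * Δ` for the deviation on every grid interval, stated for
abstract primitives `A i` that agree with `t ↦ ∫₀ᵗ α_i`. -/
theorem rounding_lower {N : ℕ} (hN : 1 ≤ N) {n : ℕ} {tg : ℕ → ℝ} (hg0 : tg 0 = 0)
    (hmono : ∀ j < n, tg j < tg (j + 1)) {Δ : ℝ} (hΔ : 0 ≤ Δ)
    (hmesh : ∀ j < n, tg (j + 1) - tg j ≤ Δ)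
    {α : ℝ → Fin N → ℝ} (A : Fin N → ℝ → ℝ) (hA : ∀ i u, A i u = ∫ τ in (0:ℝ)..u, α τ i)
    (hAmono : ∀ i u v, 0 ≤ u → u ≤ v → v ≤ tg n → A i u ≤ A i v)
    (hAlip : ∀ i u v, 0 ≤ u → u ≤ v → v ≤ tg n → A i v - A i u ≤ v - u)
    (hAsum : ∀ u, 0 ≤ u → u ≤ tg n → ∑ i, A i u = u)
    (j : ℕ) (hj : j < n) (u : ℝ) (h1 : tg j ≤ u) (h2 : u ≤ tg (j + 1)) (i : Fin N) :
    -(((N : ℝ) - 1) / N * Δ)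
      ≤ A i u - (surSum tg α j i + surRound tg α j i * (u - tg j)) := by
  induction j generalizing u i with
  | zero =>
    obtain ⟨k, hk, hmax⟩ := surRound_spec hN tg α 0
    simp only [← hA] at hmax
    have hb : tg (0 + 1) ≤ tg n := grid_mono hmono hj le_rfl
    have ha : 0 ≤ tg 0 := hg0.ge
    rw [hk]
    refine rounding_step hN A _ k (tg 0) (tg (0 + 1)) Δ u (hmesh 0 hj)
      (fun i => hAmono i _ _ ha h1 (h2.trans hb))
      (fun i => hAlip i _ _ (ha.trans h1) h2 hb)
      (hAsum _ (ha.trans (h1.trans h2)) hb) ?_ hmax (fun l => ?_) i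
    · rw [sum_surSum hN, hg0, sub_zero]
    · have hN' : (1:ℝ) ≤ N := by exact_mod_cast hN
      have : 0 ≤ ((N : ℝ) - 1) / N * Δ :=
        mul_nonneg (div_nonneg (by linarith) (by linarith)) hΔ
      simpa [hA, hg0, surSum_zero] using this
  | succ j ih =>
    obtain ⟨k, hk, hmax⟩ := surRound_spec hN tg α (j + 1)
    simp only [← hA] at hmax
    have hb : tg (j + 1 + 1) ≤ tg n := grid_mono hmono hj le_rfl
    have ha : 0 ≤ tg (j + 1) := hg0 ▸ grid_mono hmono (Nat.zero_le _) hj.le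
    rw [hk]
    refine rounding_step hN A _ k (tg (j + 1)) (tg (j + 1 + 1)) Δ u (hmesh _ hj)
      (fun i => hAmono i _ _ ha h1 (h2.trans hb))
      (fun i => hAlip i _ _ (ha.trans h1) h2 hb)
      (hAsum _ (ha.trans (h1.trans h2)) hb) ?_ hmax (fun l => ?_) i
    · rw [sum_surSum hN, hg0, sub_zero]
    · rw [surSum_succ]
      exact ih (by omega) (tg (j + 1)) (hmono j (by omega)).le le_rfl l

/-- Lemma 4 (1) of the paper (Sager–Bock–Diehl): the sum-up rounding `β` of `α` on a
grid with mesh size `Δt` satisfies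
`max_i |∫_0^t (α_i - β_i)| ≤ (N-1) Δt` for every `t ∈ [0, t_f]`. -/
theorem sum_up_rounding_integral_deviation
    (t_f : ℝ) (ht_f : 0 < t_f) (N : ℕ) (hN : 1 ≤ N)
    (n : ℕ) (hn : 0 < n) (tg : ℕ → ℝ) (hg0 : tg 0 = 0) (hgn : tg n = t_f)
    (hmono : ∀ j < n, tg j < tg (j + 1))
    (Δt : ℝ) (hmesh : ∀ j < n, tg (j + 1) - tg j ≤ Δt)
    (α : ℝ → Fin N → ℝ)
    (hαmeas : ∀ i, Measurable fun τ => α τ i)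
    (hαint : ∀ i, IntervalIntegrable (fun τ => α τ i) volume 0 t_f)
    (hα01 : ∀ τ ∈ Set.Icc (0:ℝ) t_f, ∀ i, α τ i ∈ Set.Icc (0:ℝ) 1)
    (hαsum : ∀ τ ∈ Set.Icc (0:ℝ) t_f, ∑ i, α τ i = 1)
    (β : ℝ → Fin N → ℝ)
    (hβ : ∀ j < n, ∀ τ ∈ Set.Ico (tg j) (tg (j + 1)), β τ = surRound tg α j) :
    ∀ t ∈ Set.Icc (0:ℝ) t_f, ∀ i : Fin N,
      |∫ τ in (0:ℝ)..t, (α τ i - β τ i)| ≤ ((N : ℝ) - 1) * Δt := by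
  intro u hu i
  have hii : ∀ i a b, 0 ≤ a → a ≤ b → b ≤ t_f →
      IntervalIntegrable (fun τ => α τ i) volume a b := fun i a b h1 h2 h3 =>
    (hαint i).mono_set (by
      rw [Set.uIcc_of_le h2, Set.uIcc_of_le ht_f.le]
      exact Set.Icc_subset_Icc h1 h3)
  have hsplit : ∀ i a b, 0 ≤ a → a ≤ b → b ≤ t_f →
      (∫ τ in (0:ℝ)..b, α τ i) - ∫ τ in (0:ℝ)..a, α τ i = ∫ τ in a..b, α τ i :=
    fun i a b h1 h2 h3 => intervalIntegral.integral_interval_sub_left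
      (hii i 0 b le_rfl (h1.trans h2) h3) (hii i 0 a le_rfl h1 (h2.trans h3))
  have hAmono : ∀ i a b, 0 ≤ a → a ≤ b → b ≤ tg n →
      (∫ τ in (0:ℝ)..a, α τ i) ≤ ∫ τ in (0:ℝ)..b, α τ i := by
    intro i a b h1 h2 h3
    rw [hgn] at h3
    have h4 := hsplit i a b h1 h2 h3
    have h5 : 0 ≤ ∫ τ in a..b, α τ i := intervalIntegral.integral_nonneg h2
      fun τ hτ => (hα01 τ ⟨h1.trans hτ.1, hτ.2.trans h3⟩ i).1
    linarith
  have hAlip : ∀ i a b, 0 ≤ a → a ≤ b → b ≤ tg n →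
      (∫ τ in (0:ℝ)..b, α τ i) - (∫ τ in (0:ℝ)..a, α τ i) ≤ b - a := by
    intro i a b h1 h2 h3
    rw [hgn] at h3
    rw [hsplit i a b h1 h2 h3]
    calc ∫ τ in a..b, α τ i ≤ ∫ _τ in a..b, (1:ℝ) :=
          intervalIntegral.integral_mono_on h2 (hii i a b h1 h2 h3) intervalIntegrable_const
            fun τ hτ => (hα01 τ ⟨h1.trans hτ.1, hτ.2.trans h3⟩ i).2
      _ = b - a := by simp
  have hAsum : ∀ b, 0 ≤ b → b ≤ tg n → ∑ i, ∫ τ in (0:ℝ)..b, α τ i = b := by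
    intro b h1 h3
    rw [hgn] at h3
    rw [← intervalIntegral.integral_finsetSum fun i _ => hii i 0 b le_rfl h1 h3]
    calc ∫ τ in (0:ℝ)..b, ∑ i, α τ i = ∫ _τ in (0:ℝ)..b, (1:ℝ) := by
          refine intervalIntegral.integral_congr fun τ hτ => ?_
          rw [Set.uIcc_of_le h1] at hτ
          exact hαsum τ ⟨hτ.1, hτ.2.trans h3⟩
      _ = b := by simp
  have hΔ : 0 ≤ Δt := by linarith [hmono 0 hn, hmesh 0 hn]
  obtain ⟨j, hj, h1, h2⟩ := exists_grid_interval (tg := tg) (u := u) (hg0 ▸ hu.1) n hn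
    (hgn ▸ hu.2)
  have hlow := rounding_lower hN hg0 hmono hΔ hmesh (α := α)
    (fun i u => ∫ τ in (0:ℝ)..u, α τ i) (fun _ _ => rfl) hAmono hAlip hAsum j hj u h1 h2
  rw [integral_sub_rounding hg0 hmono hβ i j hj u h1 h2 (hii i 0 u le_rfl hu.1 hu.2)]
  set E : Fin N → ℝ := fun i =>
    (∫ τ in (0:ℝ)..u, α τ i) - (surSum tg α j i + surRound tg α j i * (u - tg j)) with hE
  have hlow' : ∀ l, -(((N : ℝ) - 1) / N * Δt) ≤ E l := hlow
  have hEsum : ∑ l, E l = 0 := by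
    simp only [hE, Finset.sum_sub_distrib, Finset.sum_add_distrib, ← Finset.sum_mul,
      sum_surRound hN, sum_surSum hN, hAsum u hu.1 (hgn ▸ hu.2), hg0]
    ring
  have hN' : (1:ℝ) ≤ N := by exact_mod_cast hN
  have hc1 : ((N : ℝ) - 1) / N * Δt ≤ Δt :=
    mul_le_of_le_one_left hΔ ((div_le_one (by linarith)).mpr (by linarith))
  have hc2 : ((N : ℝ) - 1) / N * Δt ≤ ((N : ℝ) - 1) * Δt :=
    mul_le_mul_of_nonneg_right (div_le_self (by linarith) hN') hΔ
  change |E i| ≤ _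
  rw [abs_le]
  refine ⟨by linarith [hlow' i], ?_⟩
  have h3 : ∑ _l ∈ Finset.univ.erase i, (-Δt) ≤ ∑ l ∈ Finset.univ.erase i, E l :=
    Finset.sum_le_sum fun l _ => by linarith [hlow' l]
  have h4 := Finset.add_sum_erase Finset.univ E (Finset.mem_univ i)
  rw [Finset.sum_const, Finset.card_erase_of_mem (Finset.mem_univ i), Finset.card_univ,
    Fintype.card_fin, nsmul_eq_mul, Nat.cast_sub hN, Nat.cast_one] at h3
  linarith
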